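/- Let A be a complex unital semisimple Banach algebra, let B be a complex unital Banach algebra possessing a separating family of finite-dimensional irreducible representations, and let T : A → B be a linear, unital, surjective map satisfying ρ(T(a)) = ρ(a) for every a ∈ A. Then σ_B(T(a)) ⊆ σ_A(a) for every a ∈ A; in particular, T(a) is invertible in B whenever a is invertible in A. -/

import Mathlib

/-!
Composing `T` with a representation `π i` gives a surjection `S : A → M_n(ℂ)` that does not increase
the spectral radius. The traces of the powers of `S a` are then bounded in terms of `ρ(a)`, so by
Liouville they are constant along the conjugation orbits `t ↦ exp (t • x) * a * exp (-t • x)`, which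
gives `tr (S a ^ k * S ⁅x, a⁆) = 0`. Hence `S ⁅x, y⁆` depends only on `S x` and `S y`, and by
Herstein's theorem on Jordan derivations it is a biderivation in them; Brešar's identity makes it
vanish when `S x` and `S y` commute, and conversely unless it is identically zero. Semisimplicity
of `A` now makes `T` injective, so `x` and `y` commute as soon as `T x` and `T y` do.

For the converse, let `K` be the intersection of the kernels of those `π i` for which the
biderivation is nonzero. If `x` and `y` commute, then `⁅T x, T y⁆ ∈ K`. Elements of `A` that `T`
sends into `K` are central, so the spectral radius is subadditive on `K`; a second use of Liouville
shows that every `π i` maps `K` to scalars, and a scalar commutator has trace zero.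

Finally, let `a * b = 1 = b * a` and `T c = T a * T b`. The numbers `ρ(x + r)`, `r ∈ ℝ`, determine
`max Re σ(x)`, so the joint spectra of `(a, b, c)` and `(T a, T b, T c)` have the same convex hull.
Its extreme points lie in both joint spectra, so they satisfy `z₂ = z₀ * z₁ = 1`. Thus the whole
hull lies in the hyperplane `z₂ = 1`, and `z₀ ≠ 0` on the joint spectrum of `(T a, T b, T c)`.
-/

/-- Primeness of a noncommutative ring, in its elementwise form: `p R q = 0` forces `p = 0` or
`q = 0`. The zero ring counts as prime, so that all matrix rings over a domain do. -/
def IsPrimeRing (R : Type*) [Ring R] : Prop :=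
  ∀ p q : R, (∀ c, p * c * q = 0) → p = 0 ∨ q = 0

section JordanDerivation

variable {R : Type*} [Ring R]

theorem IsPrimeRing.eq_zero_or_eq_zero_of_mul_mul_add (hR : IsPrimeRing R)
    (h2 : IsLeftRegular (2 : R)) {p q : R} (h : ∀ c, p * c * q + q * c * p = 0) :
    p = 0 ∨ q = 0 := by
  have hqqp : ∀ c d, q * c * q * d * p = 0 := fun c d ↦ h2 <| by
    linear_combination (norm := noncomm_ring) h (c * q * d) + q * c * h d - h c * (d * q)
  refine or_iff_not_imp_left.mpr fun hp ↦ ?_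
  have hqq : ∀ c, q * c * q = 0 := fun c ↦ (hR _ _ (hqqp c)).resolve_right hp
  simpa only [or_self] using hR q q hqq

/-- A Jordan derivation: an additive map satisfying the Leibniz rule on squares. -/
def IsJordanDerivation (D : R →+ R) : Prop :=
  ∀ a, D (a * a) = D a * a + a * D a

/-- The failure `D (a * b) - D a * b - a * D b` of the Leibniz rule. -/
def leibnizDefect (D : R →+ R) (a b : R) : R :=
  D (a * b) - D a * b - a * D b

namespace IsJordanDerivation

variable {D : R →+ R}

theorem map_mul_add_map_mul_swap (hD : IsJordanDerivation D) (a b : R) :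
    D (a * b) + D (b * a) = D a * b + a * D b + D b * a + b * D a := by
  have h := hD (a + b)
  simp only [add_mul, mul_add, map_add] at h
  linear_combination (norm := noncomm_ring) h - hD a - hD b

theorem leibnizDefect_swap (hD : IsJordanDerivation D) (a b : R) :
    leibnizDefect D b a = -leibnizDefect D a b := by
  unfold leibnizDefect
  linear_combination (norm := noncomm_ring) hD.map_mul_add_map_mul_swap a b

theorem map_mul_mul_self (hD : IsJordanDerivation D) (h2 : IsLeftRegular (2 : R)) (a b : R) :
    D (a * b * a) = D a * b * a + a * D b * a + a * b * D a := h2 <| by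
  have h := hD.map_mul_add_map_mul_swap a (a * b + b * a)
  simp only [mul_add, add_mul, map_add, mul_assoc] at h ⊢
  have h' := hD.map_mul_add_map_mul_swap (a * a) b
  rw [hD, mul_assoc] at h'
  linear_combination (norm := noncomm_ring) h - h' + a * hD.map_mul_add_map_mul_swap a b
    + hD.map_mul_add_map_mul_swap a b * a

theorem map_mul_mul_add_map_mul_mul_swap (hD : IsJordanDerivation D) (h2 : IsLeftRegular (2 : R))
    (a b c : R) :
    D (a * b * c) + D (c * b * a) =
      D a * b * c + a * D b * c + a * b * D c + D c * b * a + c * D b * a + c * b * D a := by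
  have h := hD.map_mul_mul_self h2 (a + c) b
  simp only [add_mul, mul_add, map_add] at h
  linear_combination (norm := noncomm_ring) h - hD.map_mul_mul_self h2 a b
    - hD.map_mul_mul_self h2 c b

-- The identity compares two expansions of `D (a * b * c * b * a + b * a * c * a * b)`.
theorem leibnizDefect_mul_mul_lie_add (hD : IsJordanDerivation D) (h2 : IsLeftRegular (2 : R))
    (a b c : R) :
    leibnizDefect D a b * c * ⁅a, b⁆ + ⁅a, b⁆ * c * leibnizDefect D a b = 0 := by
  have houter := hD.map_mul_mul_add_map_mul_mul_swap h2 (a * b) c (b * a)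
  have hleft := hD.map_mul_mul_self h2 a (b * c * b)
  have hright := hD.map_mul_mul_self h2 b (a * c * a)
  rw [hD.map_mul_mul_self h2 b c] at hleft
  rw [hD.map_mul_mul_self h2 a c] at hright
  have hswap := hD.leibnizDefect_swap a b
  simp only [leibnizDefect, mul_assoc, Ring.lie_def] at houter hleft hright hswap ⊢
  linear_combination (norm := noncomm_ring) houter - hleft - hright
    + a * b * c * hswap + hswap * c * (a * b)

theorem leibnizDefect_eq_zero_or_commute (hD : IsJordanDerivation D) (hR : IsPrimeRing R)
    (h2 : IsLeftRegular (2 : R)) (a b : R) : leibnizDefect D a b = 0 ∨ Commute a b := by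
  rw [commute_iff_lie_eq]
  exact hR.eq_zero_or_eq_zero_of_mul_mul_add h2 (hD.leibnizDefect_mul_mul_lie_add h2 a b)

-- Otherwise `{c | leibnizDefect D a c = 0}` and `{c | Commute a c}` would be proper additive
-- subgroups covering `R`.
theorem commute_of_leibnizDefect_ne_zero (hD : IsJordanDerivation D) (hR : IsPrimeRing R)
    (h2 : IsLeftRegular (2 : R)) {a b : R} (hab : leibnizDefect D a b ≠ 0) (c : R) :
    Commute a c := by
  have hcomm := (hD.leibnizDefect_eq_zero_or_commute hR h2 a b).resolve_left hab
  refine (hD.leibnizDefect_eq_zero_or_commute hR h2 a c).elim (fun hac ↦ ?_) id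
  have hbc : leibnizDefect D a (b + c) = leibnizDefect D a b := by
    unfold leibnizDefect at hac ⊢
    simp only [mul_add, map_add]
    linear_combination (norm := noncomm_ring) hac
  simpa using
    ((hD.leibnizDefect_eq_zero_or_commute hR h2 a (b + c)).resolve_left (hbc ▸ hab)).sub_right hcomm

/-- **Herstein's theorem**. -/
theorem map_mul (hD : IsJordanDerivation D) (hR : IsPrimeRing R) (h2 : IsLeftRegular (2 : R))
    (a b : R) : D (a * b) = D a * b + a * D b := by
  by_contra hne
  have hab : leibnizDefect D a b ≠ 0 := fun h ↦
    hne (sub_eq_zero.mp (by rw [← h, leibnizDefect, sub_sub]))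
  have hba : leibnizDefect D b a ≠ 0 := by rwa [hD.leibnizDefect_swap, neg_ne_zero]
  have ha := hD.commute_of_leibnizDefect_ne_zero hR h2 hab
  have hb := hD.commute_of_leibnizDefect_ne_zero hR h2 hba
  refine hne (h2 ?_)
  have h := hD.map_mul_add_map_mul_swap a b
  rw [(ha b).eq, (hb (D a)).eq, ← (ha (D b)).eq] at h
  rw [(ha b).eq]
  linear_combination (norm := noncomm_ring) h

end IsJordanDerivation

-- Brešar's identity: apply the two Leibniz rules to `F (x * u) (y * v)` in either order.
theorem lie_mul_mul_eq_of_biderivation (F : R → R → R)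
    (hleft : ∀ x y z, F (x * y) z = F x z * y + x * F y z)
    (hright : ∀ x y z, F x (y * z) = F x y * z + y * F x z) (x y w u v : R) :
    ⁅x, y⁆ * w * F u v = F x y * w * ⁅u, v⁆ := by
  have hlie : ∀ u, ⁅x, y⁆ * F u v = F x y * ⁅u, v⁆ := fun u ↦ by
    have h : F (x * u) y * v + y * F (x * u) v = F x (y * v) * u + x * F u (y * v) := by
      rw [← hright, ← hleft]
    simp only [hleft, hright] at h
    rw [Ring.lie_def, Ring.lie_def]
    linear_combination (norm := noncomm_ring) -h
  have h := hlie (w * u)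
  rw [hleft] at h
  have hw := hlie w
  simp only [Ring.lie_def] at h hw ⊢
  linear_combination (norm := noncomm_ring) h - hw * u

end JordanDerivation

theorem isLeftRegular_two_of_algebra (K R : Type*) [Semifield K] [NeZero (2 : K)]
    [Semiring R] [Algebra K R] : IsLeftRegular (2 : R) := by
  simpa only [map_ofNat] using
    ((IsUnit.mk0 (2 : K) two_ne_zero).map (algebraMap K R)).isRegular.left

section MatrixTrace

variable {m : Type*} [Fintype m] [DecidableEq m]

theorem isPrimeRing_matrix {K : Type*} [Ring K] [NoZeroDivisors K] :
    IsPrimeRing (Matrix m m K) := by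
  intro p q h
  by_contra! hpq
  obtain ⟨i, j, hij⟩ : ∃ i j, p i j ≠ 0 := by
    by_contra! hp
    exact hpq.1 (Matrix.ext hp)
  obtain ⟨k, l, hkl⟩ : ∃ k l, q k l ≠ 0 := by
    by_contra! hq
    exact hpq.2 (Matrix.ext hq)
  have hzero : (p * Matrix.single j k 1 * q : Matrix m m K) i l = 0 := by rw [h, Matrix.zero_apply]
  rw [Matrix.mul_assoc, Matrix.mul_apply, Finset.sum_eq_single j] at hzero
  · simp_all
  · intro b _ hb
    simp [hb]
  · simp

omit [DecidableEq m] in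
theorem eq_zero_of_forall_commute_of_trace_eq_zero {K : Type*} [CommRing K] [NoZeroDivisors K]
    [CharZero K] {M : Matrix m m K} (hM : ∀ N, Commute N M) (htr : M.trace = 0) : M = 0 := by
  classical
  rcases isEmpty_or_nonempty m with hm | hm
  · exact Subsingleton.elim _ _
  obtain ⟨z, rfl⟩ := Matrix.mem_range_scalar_of_commute_single fun i j _ ↦ hM (Matrix.single i j 1)
  have hz : (Fintype.card m : K) * z = 0 := by simpa [Matrix.trace] using htr
  simp [(mul_eq_zero.mp hz).resolve_left (Nat.cast_ne_zero.mpr Fintype.card_ne_zero)]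

-- Since the trace form is nondegenerate, this follows by polarising both hypotheses.
theorem isJordanDerivation_of_trace_eq_zero {K : Type*} [CommRing K] (h2 : IsLeftRegular (2 : K))
    {D : Matrix m m K →+ Matrix m m K} (hsq : ∀ Y, (Y * D Y).trace = 0)
    (hcube : ∀ Y, (Y * Y * D Y).trace = 0) : IsJordanDerivation D := by
  refine fun Y ↦ Matrix.ext_iff_trace_mul_right.mpr fun W ↦ h2 ?_
  have hadd := hcube (Y + W)
  have hsub := hcube (Y - W)
  have hpolar := hsq (Y * Y + W)
  simp only [map_add, map_sub, add_mul, mul_add, sub_mul, mul_sub, Matrix.trace_add,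
    Matrix.trace_sub] at hadd hsub hpolar ⊢
  have hYW : (Y * W * D Y).trace = (D Y * Y * W).trace := by
    rw [Matrix.trace_mul_comm, ← mul_assoc]
  have hWY : (W * Y * D Y).trace = (Y * D Y * W).trace := by
    rw [mul_assoc, Matrix.trace_mul_comm]
  rw [Matrix.trace_mul_comm W (D (Y * Y))] at hpolar
  linear_combination 2 * hpolar - 2 * hsq (Y * Y) - 2 * hsq W - hadd + hsub + 2 * hcube W
    + 2 * hYW + 2 * hWY

theorem norm_trace_le_of_forall_mem_spectrum {M : Matrix m m ℂ} {r : ℝ}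
    (h : ∀ z ∈ spectrum ℂ M, ‖z‖ ≤ r) : ‖M.trace‖ ≤ Fintype.card m * r := by
  have hcard : M.charpoly.roots.card = Fintype.card m := by
    rw [← (IsAlgClosed.splits M.charpoly).natDegree_eq_card_roots, Matrix.charpoly_natDegree_eq_dim]
  calc ‖M.trace‖ = ‖M.charpoly.roots.sum‖ := by rw [Matrix.trace_eq_sum_roots_charpoly]
    _ ≤ (M.charpoly.roots.map norm).sum :=
        Multiset.le_sum_of_subadditive norm norm_zero.le norm_add_le _
    _ ≤ (M.charpoly.roots.map norm).card • r := by
        refine Multiset.sum_le_card_nsmul _ _ fun y hy ↦ ?_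
        obtain ⟨z, hz, rfl⟩ := Multiset.mem_map.mp hy
        exact h z (Matrix.mem_spectrum_of_isRoot_charpoly (Polynomial.isRoot_of_mem_roots hz))
    _ = Fintype.card m * r := by rw [Multiset.card_map, hcard, nsmul_eq_mul]

theorem norm_trace_pow_le_of_forall_mem_spectrum {M : Matrix m m ℂ} {r : ℝ}
    (h : ∀ z ∈ spectrum ℂ M, ‖z‖ ≤ r) (k : ℕ) : ‖(M ^ k).trace‖ ≤ Fintype.card m * r ^ k := by
  rcases k.eq_zero_or_pos with rfl | hk
  · simp
  refine norm_trace_le_of_forall_mem_spectrum fun z hz ↦ ?_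
  rw [spectrum.map_pow_of_pos M hk] at hz
  obtain ⟨w, hw, rfl⟩ := hz
  simpa only [norm_pow] using pow_le_pow_left₀ (norm_nonneg w) (h w hw) k

end MatrixTrace

attribute [local instance] LieRing.ofAssociativeRing

/-- The spectral radius as a real number; it is finite in a complex Banach algebra. -/
local notation "ρ(" a ")" => ENNReal.toReal (spectralRadius ℂ a)

section SpectralRadius

theorem spectralRadius_units_conj {A : Type*} [Ring A] [Algebra ℂ A] (u : Aˣ) (a : A) :
    spectralRadius ℂ (u * a * ↑u⁻¹ : A) = spectralRadius ℂ a := by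
  rw [spectralRadius, spectrum.units_conjugate, spectralRadius]

variable {A : Type*} [NormedRing A] [NormedAlgebra ℂ A] [CompleteSpace A]

theorem spectralRadius_le_nnnorm_mul_nnnorm_one (a : A) :
    spectralRadius ℂ a ≤ ↑(‖a‖₊ * ‖(1 : A)‖₊) :=
  iSup₂_le fun _ hz ↦ ENNReal.coe_le_coe.mpr (spectrum.norm_le_norm_mul_of_mem hz)

theorem spectralRadius_ne_top (a : A) : spectralRadius ℂ a ≠ ⊤ :=
  ne_top_of_le_ne_top ENNReal.coe_ne_top (spectralRadius_le_nnnorm_mul_nnnorm_one a)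

theorem toReal_spectralRadius_le_norm_mul_norm_one (a : A) : ρ(a) ≤ ‖a‖ * ‖(1 : A)‖ := by
  simpa using ENNReal.toReal_mono ENNReal.coe_ne_top (spectralRadius_le_nnnorm_mul_nnnorm_one a)

theorem norm_le_toReal_spectralRadius {a : A} {z : ℂ} (hz : z ∈ spectrum ℂ a) : ‖z‖ ≤ ρ(a) := by
  simpa using ENNReal.toReal_mono (spectralRadius_ne_top a) (le_iSup₂_of_le z hz le_rfl)

theorem exists_mem_spectrum_norm_eq [Nontrivial A] (a : A) : ∃ z ∈ spectrum ℂ a, ‖z‖ = ρ(a) := by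
  obtain ⟨z, hz, hza⟩ := spectrum.exists_nnnorm_eq_spectralRadius a
  exact ⟨z, hz, by simp [← hza]⟩

end SpectralRadius

section Liouville

variable {A : Type*} [NormedRing A] [NormedAlgebra ℂ A] [CompleteSpace A]

theorem hasDerivAt_exp_mul_mul_exp_neg (x a : A) :
    HasDerivAt (fun t : ℂ ↦ NormedSpace.exp (t • x) * a * NormedSpace.exp (t • -x)) ⁅x, a⁆ 0 := by
  have h := ((hasDerivAt_exp_smul_const (𝕂 := ℂ) x 0).mul_const a).mul
    (hasDerivAt_exp_smul_const (𝕂 := ℂ) (-x) 0)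
  simpa [Ring.lie_def, sub_eq_add_neg, Pi.mul_def] using h

theorem exists_units_conj_eq_exp_mul_mul_exp_neg (x a : A) :
    ∃ u : Aˣ, u * a * ↑u⁻¹ = NormedSpace.exp x * a * NormedSpace.exp (-x) := by
  let : NormedAlgebra ℚ A := NormedAlgebra.restrictScalars ℚ ℂ A
  have hx : Commute x (-x) := (Commute.refl x).neg_right
  refine ⟨⟨NormedSpace.exp x, NormedSpace.exp (-x), ?_, ?_⟩, rfl⟩
  · rw [← NormedSpace.exp_add_of_commute hx, add_neg_cancel, NormedSpace.exp_zero]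
  · rw [← NormedSpace.exp_add_of_commute hx.symm, neg_add_cancel, NormedSpace.exp_zero]

-- By Liouville, `g` is constant along `t ↦ exp (t • x) * a * exp (-t • x)`.
theorem fderiv_lie_eq_zero_of_norm_units_conj_le {F : Type*} [NormedAddCommGroup F]
    [NormedSpace ℂ F] {g : A → F} (hg : Differentiable ℂ g) {a : A} {C : ℝ}
    (hC : ∀ u : Aˣ, ‖g (u * a * ↑u⁻¹)‖ ≤ C) (x : A) : fderiv ℂ g a ⁅x, a⁆ = 0 := by
  set γ : ℂ → A := fun t ↦ NormedSpace.exp (t • x) * a * NormedSpace.exp (t • -x) with hγ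
  have hγdiff : Differentiable ℂ γ :=
    ((differentiable_exp_smul_const ℂ x).mul_const a).mul (differentiable_exp_smul_const ℂ (-x))
  have hbdd : Bornology.IsBounded (Set.range (g ∘ γ)) := by
    refine isBounded_iff_forall_norm_le.mpr ⟨C, Set.forall_mem_range.mpr fun t ↦ ?_⟩
    obtain ⟨u, hu⟩ := exists_units_conj_eq_exp_mul_mul_exp_neg (t • x) a
    simpa only [hu, ← smul_neg, Function.comp_apply] using hC u
  have hconst : HasDerivAt (g ∘ γ) 0 0 := by
    rw [show g ∘ γ = fun _ ↦ g (γ 0) from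
      funext fun t ↦ (hg.comp hγdiff).apply_eq_apply_of_bounded hbdd t 0]
    exact hasDerivAt_const _ _
  have hcomp : HasDerivAt (g ∘ γ) (fderiv ℂ g (γ 0) ⁅x, a⁆) 0 :=
    (hg (γ 0)).hasFDerivAt.comp_hasDerivAt 0 (hasDerivAt_exp_mul_mul_exp_neg x a)
  simpa [hγ] using hcomp.unique hconst

theorem tracial_pow_mul_lie_eq_zero {E : Type*} [NormedRing E] [NormedAlgebra ℂ E] {L : A →L[ℂ] E}
    {τ : E →L[ℂ] ℂ} (hτ : ∀ y z, τ (y * z) = τ (z * y)) {a : A} {k : ℕ} {C : ℝ}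
    (hC : ∀ u : Aˣ, ‖τ (L (u * a * ↑u⁻¹) ^ (k + 1))‖ ≤ C) (x : A) :
    τ (L a ^ k * L ⁅x, a⁆) = 0 := by
  have hcyc : ∀ i ∈ Finset.range (k + 1),
      τ (L a ^ (k - i) * L ⁅x, a⁆ * L a ^ i) = τ (L a ^ k * L ⁅x, a⁆) := by
    intro i hi
    rw [hτ, ← mul_assoc, ← pow_add,
      Nat.add_sub_cancel' (Nat.lt_succ_iff.mp (Finset.mem_range.mp hi))]
  have hderiv := τ.hasFDerivAt.comp a (L.hasFDerivAt.pow' (x := a) (k + 1))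
  have hsum := fderiv_lie_eq_zero_of_norm_units_conj_le
    (τ.differentiable.comp (L.differentiable.pow (k + 1))) hC x
  rw [hderiv.fderiv, ContinuousLinearMap.comp_apply, sum_apply, map_sum,
    Finset.sum_congr rfl fun i hi ↦ ?_, Finset.sum_const, Finset.card_range, nsmul_eq_mul] at hsum
  · exact (mul_eq_zero.mp hsum).resolve_left (Nat.cast_ne_zero.mpr k.succ_ne_zero)
  · simpa using hcyc i hi

end Liouville

/-- A linear map that does not increase the spectral radius. Unlike spectral isometries, these are
stable under composition with algebra homomorphisms, such as representations of the target. -/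
def IsSpectralContraction {A B : Type*} [Ring A] [Algebra ℂ A] [Ring B] [Algebra ℂ B]
    (S : A →ₗ[ℂ] B) : Prop :=
  ∀ a, spectralRadius ℂ (S a) ≤ spectralRadius ℂ a

/-- A linear map that preserves the spectral radius. -/
def IsSpectralIsometry {A B : Type*} [Ring A] [Algebra ℂ A] [Ring B] [Algebra ℂ B]
    (T : A →ₗ[ℂ] B) : Prop :=
  ∀ a, spectralRadius ℂ (T a) = spectralRadius ℂ a

theorem IsSpectralIsometry.isSpectralContraction {A B : Type*} [Ring A] [Algebra ℂ A] [Ring B]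
    [Algebra ℂ B] {T : A →ₗ[ℂ] B} (hT : IsSpectralIsometry T) : IsSpectralContraction T :=
  fun a ↦ (hT a).le

theorem isSpectralContraction_algHom {A B : Type*} [Ring A] [Algebra ℂ A] [Ring B] [Algebra ℂ B]
    (φ : A →ₐ[ℂ] B) : IsSpectralContraction φ.toLinearMap :=
  fun a ↦ biSup_mono fun _ hz ↦ AlgHom.spectrum_apply_subset φ a hz

namespace IsSpectralContraction

theorem algHom_comp {A B C : Type*} [Ring A] [Algebra ℂ A] [Ring B] [Algebra ℂ B] [Ring C]
    [Algebra ℂ C] {T : A →ₗ[ℂ] B} (hT : IsSpectralContraction T) (φ : B →ₐ[ℂ] C) :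
    IsSpectralContraction (φ.toLinearMap ∘ₗ T) :=
  fun a ↦ (isSpectralContraction_algHom φ (T a)).trans (hT a)

variable {A : Type*} [NormedRing A] [NormedAlgebra ℂ A] [CompleteSpace A]
  {m : Type*} [Fintype m] [DecidableEq m] {S : A →ₗ[ℂ] Matrix m m ℂ}

theorem norm_trace_pow_le (hS : IsSpectralContraction S) (a : A) (k : ℕ) :
    ‖(S a ^ k).trace‖ ≤ Fintype.card m * ρ(a) ^ k := by
  refine norm_trace_pow_le_of_forall_mem_spectrum (fun z hz ↦ ?_) k
  simpa using ENNReal.toReal_mono (spectralRadius_ne_top a)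
    ((le_iSup₂_of_le z hz le_rfl).trans (hS a))

theorem two_mul_norm_trace_mul_le (hS : IsSpectralContraction S) (a b : A) :
    2 * ‖(S a * S b).trace‖ ≤ Fintype.card m * (ρ(a + b) ^ 2 + ρ(a) ^ 2 + ρ(b) ^ 2) := by
  have hpolar : 2 * (S a * S b).trace =
      (S (a + b) ^ 2).trace - (S a ^ 2).trace - (S b ^ 2).trace := by
    simp only [sq, map_add, add_mul, mul_add, Matrix.trace_add]
    linear_combination Matrix.trace_mul_comm (S a) (S b)
  calc 2 * ‖(S a * S b).trace‖ = ‖2 * (S a * S b).trace‖ := by simp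
    _ ≤ ‖(S (a + b) ^ 2).trace‖ + ‖(S a ^ 2).trace‖ + ‖(S b ^ 2).trace‖ := by
        rw [hpolar]
        exact (norm_sub_le _ _).trans (by gcongr; exact norm_sub_le _ _)
    _ ≤ Fintype.card m * (ρ(a + b) ^ 2 + ρ(a) ^ 2 + ρ(b) ^ 2) := by
        linarith [hS.norm_trace_pow_le (a + b) 2, hS.norm_trace_pow_le a 2,
          hS.norm_trace_pow_le b 2]

theorem continuous (hS : IsSpectralContraction S) (hsurj : Function.Surjective S) :
    Continuous S := by
  refine continuous_matrix fun i j ↦ ?_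
  obtain ⟨b, hb⟩ := hsurj (Matrix.single j i 1)
  let f : A →ₗ[ℂ] ℂ := Matrix.entryLinearMap ℂ ℂ i j ∘ₗ S
  have hf : ∀ a, f a = (S a * S b).trace := fun a ↦ by
    simp [f, hb, Matrix.trace_mul_single, Matrix.entryLinearMap_apply]
  have hbound : ∀ a ∈ Metric.ball (0 : A) 1,
      ‖f a‖ ≤ Fintype.card m * (((1 + ‖b‖) ^ 2 + 1 ^ 2 + ‖b‖ ^ 2) * ‖(1 : A)‖ ^ 2) := by
    intro a ha
    have ha1 : ‖a‖ ≤ 1 := (mem_ball_zero_iff.mp ha).le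
    have hab : ‖a + b‖ ≤ 1 + ‖b‖ := (norm_add_le a b).trans (by gcongr)
    calc ‖f a‖ ≤ 2 * ‖(S a * S b).trace‖ := by
          rw [hf]
          linarith [norm_nonneg (S a * S b).trace]
      _ ≤ Fintype.card m * (ρ(a + b) ^ 2 + ρ(a) ^ 2 + ρ(b) ^ 2) := hS.two_mul_norm_trace_mul_le a b
      _ ≤ Fintype.card m * ((‖a + b‖ * ‖(1 : A)‖) ^ 2 + (‖a‖ * ‖(1 : A)‖) ^ 2 +
            (‖b‖ * ‖(1 : A)‖) ^ 2) := by
          gcongr <;> exact toReal_spectralRadius_le_norm_mul_norm_one _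
      _ ≤ Fintype.card m * (((1 + ‖b‖) ^ 2 + 1 ^ 2 + ‖b‖ ^ 2) * ‖(1 : A)‖ ^ 2) := by
          simp only [mul_pow, ← add_mul]
          gcongr
  obtain ⟨C, hC⟩ := LinearMap.bound_of_ball_bound one_pos _ f hbound
  exact AddMonoidHomClass.continuous_of_bound f C hC

open scoped Matrix.Norms.Operator in
theorem trace_pow_mul_lie (hS : IsSpectralContraction S) (hsurj : Function.Surjective S)
    (x a : A) (k : ℕ) : (S a ^ k * S ⁅x, a⁆).trace = 0 := by
  refine tracial_pow_mul_lie_eq_zero (τ := (Matrix.traceLinearMap m ℂ ℂ).toContinuousLinearMap)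
    Matrix.trace_mul_comm (L := ⟨S, hS.continuous hsurj⟩) (C := Fintype.card m * ρ(a) ^ (k + 1))
    (fun u ↦ ?_) x
  rw [← spectralRadius_units_conj u a]
  exact hS.norm_trace_pow_le _ _

theorem trace_lie_mul_add_trace_mul_lie (hS : IsSpectralContraction S)
    (hsurj : Function.Surjective S) (x a b : A) :
    (S ⁅x, a⁆ * S b).trace + (S a * S ⁅x, b⁆).trace = 0 := by
  have hab := hS.trace_pow_mul_lie hsurj x (a + b) 1
  have ha := hS.trace_pow_mul_lie hsurj x a 1
  have hb := hS.trace_pow_mul_lie hsurj x b 1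
  simp only [pow_one, lie_add, map_add, add_mul, mul_add, Matrix.trace_add] at hab ha hb
  linear_combination hab - ha - hb + Matrix.trace_mul_comm (S ⁅x, a⁆) (S b)

theorem map_lie_eq_zero_of_map_right_eq_zero (hS : IsSpectralContraction S)
    (hsurj : Function.Surjective S) (x : A) {a : A} (ha : S a = 0) : S ⁅x, a⁆ = 0 := by
  refine Matrix.ext_iff_trace_mul_right.mpr fun M ↦ ?_
  obtain ⟨b, rfl⟩ := hsurj M
  simpa [ha] using hS.trace_lie_mul_add_trace_mul_lie hsurj x a b

theorem map_lie_eq_map_lie (hS : IsSpectralContraction S) (hsurj : Function.Surjective S)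
    {x x' y y' : A} (hx : S x = S x') (hy : S y = S y') : S ⁅x, y⁆ = S ⁅x', y'⁆ := by
  have hxx : S ⁅y', x - x'⁆ = 0 :=
    hS.map_lie_eq_zero_of_map_right_eq_zero hsurj y' (by rw [map_sub, hx, sub_self])
  have hyy : S ⁅x, y - y'⁆ = 0 :=
    hS.map_lie_eq_zero_of_map_right_eq_zero hsurj x (by rw [map_sub, hy, sub_self])
  rw [lie_sub, map_sub, sub_eq_zero] at hxx hyy
  rw [hyy, ← lie_skew x y', ← lie_skew x' y', map_neg, map_neg, hxx]

theorem exists_biderivation (hS : IsSpectralContraction S) (hsurj : Function.Surjective S) :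
    ∃ F : Matrix m m ℂ → Matrix m m ℂ → Matrix m m ℂ, (∀ x y, S ⁅x, y⁆ = F (S x) (S y)) ∧
      (∀ X Y Z, F (X * Y) Z = F X Z * Y + X * F Y Z) ∧
      ∀ X Y Z, F X (Y * Z) = F X Y * Z + Y * F X Z := by
  set s := Function.surjInv hsurj
  have hs : ∀ X, S (s X) = X := Function.surjInv_eq hsurj
  let D (x : A) : Matrix m m ℂ →+ Matrix m m ℂ := AddMonoidHom.mk' (fun Y ↦ S ⁅x, s Y⁆) fun Y Z ↦ by
    rw [← map_add, ← lie_add]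
    exact hS.map_lie_eq_map_lie hsurj rfl (by simp [hs])
  have hD : ∀ x y, D x (S y) = S ⁅x, y⁆ := fun x y ↦ hS.map_lie_eq_map_lie hsurj rfl (hs _)
  have hjordan : ∀ x, IsJordanDerivation (D x) := by
    refine fun x ↦ isJordanDerivation_of_trace_eq_zero (IsRegular.of_ne_zero two_ne_zero).left
      (hsurj.forall.mpr fun y ↦ ?_) (hsurj.forall.mpr fun y ↦ ?_)
    · simpa [hD] using hS.trace_pow_mul_lie hsurj x y 1
    · simpa [hD, sq] using hS.trace_pow_mul_lie hsurj x y 2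
  have hleibniz : ∀ x Y Z, D x (Y * Z) = D x Y * Z + Y * D x Z := fun x ↦
    (hjordan x).map_mul isPrimeRing_matrix (isLeftRegular_two_of_algebra ℂ _)
  have hskew : ∀ X Y, D (s X) Y = -D (s Y) X := fun X Y ↦ by
    simp only [D, AddMonoidHom.mk'_apply, ← map_neg, lie_skew]
  refine ⟨fun X ↦ D (s X), fun x y ↦ ?_, fun X Y Z ↦ ?_, fun X ↦ hleibniz (s X)⟩
  · exact hS.map_lie_eq_map_lie hsurj (hs _).symm (hs _).symm
  · dsimp only
    rw [hskew, hleibniz, hskew X, hskew Y]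
    noncomm_ring

theorem lie_mul_mul_map_lie (hS : IsSpectralContraction S) (hsurj : Function.Surjective S)
    (x y u v : A) (W : Matrix m m ℂ) :
    ⁅S x, S y⁆ * W * S ⁅u, v⁆ = S ⁅x, y⁆ * W * ⁅S u, S v⁆ := by
  obtain ⟨F, hF, hleft, hright⟩ := hS.exists_biderivation hsurj
  rw [hF, hF]
  exact lie_mul_mul_eq_of_biderivation F hleft hright _ _ _ _ _

theorem commute_of_map_lie_eq_zero (hS : IsSpectralContraction S) (hsurj : Function.Surjective S)
    {u v : A} (huv : S ⁅u, v⁆ ≠ 0) {x y : A} (hxy : S ⁅x, y⁆ = 0) : Commute (S x) (S y) := by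
  refine commute_iff_lie_eq.mpr ((isPrimeRing_matrix _ _ fun W ↦ ?_).resolve_right huv)
  rw [hS.lie_mul_mul_map_lie hsurj, hxy, zero_mul, zero_mul]

theorem map_lie_eq_zero_of_commute (hS : IsSpectralContraction S) (hsurj : Function.Surjective S)
    {x y : A} (hxy : Commute (S x) (S y)) : S ⁅x, y⁆ = 0 := by
  have hprod : ∀ W u v, S ⁅x, y⁆ * W * ⁅S u, S v⁆ = 0 := fun W u v ↦ by
    rw [← hS.lie_mul_mul_map_lie hsurj, commute_iff_lie_eq.mp hxy, zero_mul, zero_mul]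
  by_cases hcomm : ∀ M N : Matrix m m ℂ, Commute M N
  · refine eq_zero_of_forall_commute_of_trace_eq_zero (fun N ↦ hcomm N _) ?_
    simpa using hS.trace_pow_mul_lie hsurj x y 0
  · simp only [hsurj.forall, not_forall] at hcomm
    obtain ⟨u, v, huv⟩ := hcomm
    refine (isPrimeRing_matrix _ _ fun W ↦ hprod W u v).resolve_right ?_
    rwa [← commute_iff_lie_eq]

end IsSpectralContraction

section Radical

theorem isUnit_one_add_of_spectralRadius_eq_zero {A : Type*} [Ring A] [Algebra ℂ A] {q : A}
    (hq : spectralRadius ℂ q = 0) : IsUnit (1 + q) := by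
  have hmem : (-1 : ℂ) ∉ spectrum ℂ q := fun hmem ↦ by
    have h : (‖(-1 : ℂ)‖₊ : ENNReal) ≤ spectralRadius ℂ q := le_iSup₂_of_le _ hmem le_rfl
    simp [hq] at h
  simpa [add_comm] using (spectrum.notMem_iff.mp hmem).neg

theorem mul_mem_of_isMaximal_of_spectralRadius_lie_eq_zero {A : Type*} [Ring A] [Algebra ℂ A]
    {M : Ideal A} (hM : M.IsMaximal) {q : A} (hq : ∀ a : A, spectralRadius ℂ ⁅q, a⁆ = 0) {b : A}
    (hb : b ∈ M) : b * q ∈ M := by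
  by_contra hbq
  obtain ⟨c, d, hd, hcd⟩ : ∃ c, ∃ d ∈ M, c * (b * q) + d = 1 := hM.exists_inv hbq
  refine hM.ne_top (M.eq_top_of_isUnit_mem ?_
    (isUnit_one_add_of_spectralRadius_eq_zero (hq (c * b))))
  have h : 1 + ⁅q, c * b⁆ = d + q * c * b := by
    rw [Ring.lie_def]
    linear_combination (norm := noncomm_ring) -hcd
  rw [h]
  exact M.add_mem hd (M.mul_mem_left _ hb)

theorem one_sub_pow_mul_pow_mem {R : Type*} [Ring R] {I : Ideal R} {q : R}
    (hI : ∀ b ∈ I, b * q ∈ I) {x : R} (hx : 1 - x * q ∈ I) (k : ℕ) : 1 - x ^ k * q ^ k ∈ I := by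
  have hpow (k : ℕ) : (1 - x * q) * q ^ k ∈ I := by
    induction k with
    | zero => simpa using hx
    | succ k ih => simpa only [pow_succ, mul_assoc] using hI _ ih
  induction k with
  | zero => simp
  | succ k ih =>
    have h : 1 - x ^ (k + 1) * q ^ (k + 1) = 1 - x ^ k * q ^ k + x ^ k * ((1 - x * q) * q ^ k) := by
      rw [pow_succ, pow_succ']
      noncomm_ring
    rw [h]
    exact I.add_mem ih (I.mul_mem_left _ (hpow k))

theorem exists_norm_pow_mul_pow_lt_one {A : Type*} [NormedRing A] [NormedAlgebra ℂ A]
    [CompleteSpace A] {q : A} (hq : spectralRadius ℂ q = 0) (x : A) :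
    ∃ k : ℕ, ‖x ^ k * q ^ k‖ < 1 := by
  have hlim := spectrum.pow_nnnorm_pow_one_div_tendsto_nhds_spectralRadius q
  rw [hq] at hlim
  have hpos : (0 : ENNReal) < ((‖x‖₊ + 1)⁻¹ : NNReal) := ENNReal.coe_pos.mpr (by positivity)
  obtain ⟨k, hk, hk1⟩ := ((hlim.eventually_lt_const hpos).and (Filter.eventually_ge_atTop 1)).exists
  have hqk : ‖q ^ k‖ < ((‖x‖ + 1) ^ k)⁻¹ := by
    rw [← ENNReal.coe_rpow_of_nonneg _ (by positivity), ENNReal.coe_lt_coe, one_div,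
      NNReal.rpow_inv_lt_iff (Nat.cast_pos.mpr hk1), NNReal.rpow_natCast, inv_pow] at hk
    exact_mod_cast hk
  refine ⟨k, ?_⟩
  calc ‖x ^ k * q ^ k‖ ≤ ‖x ^ k‖ * ‖q ^ k‖ := norm_mul_le _ _
    _ ≤ (‖x‖ + 1) ^ k * ‖q ^ k‖ := by
        gcongr
        exact (norm_pow_le' x hk1).trans (by gcongr; linarith)
    _ < (‖x‖ + 1) ^ k * ((‖x‖ + 1) ^ k)⁻¹ := by gcongr
    _ = 1 := mul_inv_cancel₀ (by positivity)

theorem mem_jacobson_of_spectralRadius_lie_eq_zero {A : Type*} [NormedRing A] [NormedAlgebra ℂ A]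
    [CompleteSpace A] {q : A} (hq : spectralRadius ℂ q = 0)
    (hlie : ∀ a : A, spectralRadius ℂ ⁅q, a⁆ = 0) : q ∈ (⊥ : Ideal A).jacobson := by
  refine Ideal.mem_sInf.mpr fun {M} hM ↦ ?_
  by_contra hqM
  obtain ⟨x, d, hd, hxd⟩ : ∃ x, ∃ d ∈ M, x * q + d = 1 := hM.2.exists_inv hqM
  have hmul : ∀ b ∈ M, b * q ∈ M := fun b ↦
    mul_mem_of_isMaximal_of_spectralRadius_lie_eq_zero hM.2 hlie
  obtain ⟨k, hk⟩ := exists_norm_pow_mul_pow_lt_one hq x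
  exact hM.2.ne_top (M.eq_top_of_isUnit_mem
    (one_sub_pow_mul_pow_mem hmul (by rwa [← hxd, add_sub_cancel_left]) k)
    (isUnit_one_sub_of_norm_lt_one hk))

end Radical

section Ideal

-- Polarising `tr (φ k) ^ 2` bounds `tr (φ k' * φ l)` over the conjugates `k'` of `k`, so Liouville
-- applies.
theorem trace_map_lie_mul_eq_zero_of_spectralRadius_add_le {B : Type*} [NormedRing B]
    [NormedAlgebra ℂ B] [CompleteSpace B] {m : Type*} [Fintype m] [DecidableEq m]
    (φ : B →ₐ[ℂ] Matrix m m ℂ) (hφ : Function.Surjective φ) {K : TwoSidedIdeal B}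
    (hK : ∀ k ∈ K, ∀ l ∈ K, ρ(k + l) ≤ ρ(k) + ρ(l)) {k l : B} (hk : k ∈ K) (hl : l ∈ K) (b : B) :
    (φ ⁅b, k⁆ * φ l).trace = 0 := by
  have hcont := isSpectralContraction_algHom φ
  let g : B →L[ℂ] ℂ :=
    ⟨Matrix.traceLinearMap m ℂ ℂ ∘ₗ LinearMap.mulRight ℂ (φ l) ∘ₗ φ.toLinearMap, by
      have hφcont : Continuous φ := hcont.continuous hφ
      change Continuous fun v ↦ (φ v * φ l).trace
      fun_prop⟩
  have hbound : ∀ u : Bˣ, ‖g (u * k * ↑u⁻¹)‖ ≤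
      Fintype.card m * ((ρ(k) + ρ(l)) ^ 2 + ρ(k) ^ 2 + ρ(l) ^ 2) := by
    intro u
    set k' : B := u * k * ↑u⁻¹
    have hk' : k' ∈ K := K.mul_mem_right _ _ (K.mul_mem_left _ _ hk)
    have hg : g k' = (φ k' * φ l).trace := rfl
    calc ‖g k'‖ ≤ 2 * ‖(φ k' * φ l).trace‖ := by
          rw [hg]
          linarith [norm_nonneg (φ k' * φ l).trace]
      _ ≤ Fintype.card m * (ρ(k' + l) ^ 2 + ρ(k') ^ 2 + ρ(l) ^ 2) :=
          hcont.two_mul_norm_trace_mul_le k' l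
      _ ≤ Fintype.card m * ((ρ(k') + ρ(l)) ^ 2 + ρ(k') ^ 2 + ρ(l) ^ 2) := by
          gcongr
          exact hK k' hk' l hl
      _ = _ := by rw [spectralRadius_units_conj]
  have h := fderiv_lie_eq_zero_of_norm_units_conj_le g.differentiable hbound b
  rwa [g.fderiv] at h

theorem commute_map_of_spectralRadius_add_le {B : Type*} [NormedRing B]
    [NormedAlgebra ℂ B] [CompleteSpace B] {m : Type*} [Fintype m] [DecidableEq m]
    (φ : B →ₐ[ℂ] Matrix m m ℂ) (hφ : Function.Surjective φ) {K : TwoSidedIdeal B}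
    (hK : ∀ k ∈ K, ∀ l ∈ K, ρ(k + l) ≤ ρ(k) + ρ(l)) {k : B} (hk : k ∈ K) (M : Matrix m m ℂ) :
    Commute M (φ k) := by
  obtain ⟨b, rfl⟩ := hφ M
  have hbk : ⁅b, k⁆ ∈ K := K.sub_mem (K.mul_mem_left _ _ hk) (K.mul_mem_right _ _ hk)
  have hzero : φ ⁅b, k⁆ = 0 := by
    refine or_self_iff.mp (isPrimeRing_matrix _ _ (hφ.forall.mpr fun w ↦ ?_))
    refine Matrix.ext_iff_trace_mul_right.mpr (hφ.forall.mpr fun v ↦ ?_)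
    simpa [mul_assoc] using trace_map_lie_mul_eq_zero_of_spectralRadius_add_le φ hφ hK hk
      (K.mul_mem_right _ v (K.mul_mem_left w _ hbk)) b
  rwa [Ring.lie_def, map_sub, map_mul, map_mul, sub_eq_zero] at hzero

end Ideal

section ConvexHull

variable {E : Type*} [AddCommGroup E] [Module ℝ E] [TopologicalSpace E]

theorem isCompact_convexHull_of_finiteDimensional [ContinuousAdd E] [ContinuousSMul ℝ E]
    [FiniteDimensional ℝ E] {s : Set E} (hs : IsCompact s) : IsCompact (convexHull ℝ s) := by
  let combine (k : ℕ) (p : (Fin k → ℝ) × (Fin k → E)) : E := ∑ i, p.1 i • p.2 i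
  have hunion : convexHull ℝ s = ⋃ k ∈ Set.Iic (Module.finrank ℝ E + 1),
      combine k '' (stdSimplex ℝ (Fin k) ×ˢ Set.univ.pi fun _ ↦ s) := by
    refine Set.Subset.antisymm (fun x hx ↦ ?_) (Set.iUnion₂_subset fun k _ ↦ ?_)
    · obtain ⟨ι, _, z, w, hz, hzind, hw, hw1, rfl⟩ := eq_pos_convex_span_of_mem_convexHull hx
      let e := (Fintype.equivFin ι).symm
      refine Set.mem_iUnion₂.mpr ⟨Fintype.card ι,
        hzind.card_le_finrank_succ.trans (by gcongr; exact Submodule.finrank_le _),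
        (w ∘ e, z ∘ e), ⟨⟨fun i ↦ (hw _).le, ?_⟩, fun i _ ↦ hz ⟨_, rfl⟩⟩, ?_⟩
      · exact (e.sum_comp w).trans hw1
      · exact e.sum_comp fun i ↦ w i • z i
    · rintro _ ⟨⟨w, z⟩, ⟨⟨hw, hw1⟩, hz⟩, rfl⟩
      exact (convex_convexHull ℝ s).sum_mem (fun i _ ↦ hw i) hw1
        fun i _ ↦ subset_convexHull ℝ s (hz i trivial)
  rw [hunion]
  refine (Set.finite_Iic _).isCompact_biUnion fun k _ ↦ ?_
  exact ((isCompact_stdSimplex ℝ (Fin k)).prod (isCompact_univ_pi fun _ ↦ hs)).image (by fun_prop)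

theorem subset_closure_convexHull_inter [IsTopologicalAddGroup E] [ContinuousSMul ℝ E]
    [FiniteDimensional ℝ E] [T2Space E] [LocallyConvexSpace ℝ E]
    {s t : Set E} (ht : IsCompact t) (hst : s ⊆ convexHull ℝ t) (hts : t ⊆ convexHull ℝ s) :
    t ⊆ closure (convexHull ℝ (s ∩ t)) := by
  have heq : convexHull ℝ s = convexHull ℝ t :=
    (convexHull_min hst (convex_convexHull ℝ t)).antisymm
      (convexHull_min hts (convex_convexHull ℝ s))
  have hext : (convexHull ℝ t).extremePoints ℝ ⊆ s ∩ t :=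
    Set.subset_inter (heq ▸ extremePoints_convexHull_subset) extremePoints_convexHull_subset
  calc t ⊆ convexHull ℝ t := subset_convexHull ℝ t
    _ = closure (convexHull ℝ ((convexHull ℝ t).extremePoints ℝ)) :=
        (closure_convexHull_extremePoints (isCompact_convexHull_of_finiteDimensional ht)
          (convex_convexHull ℝ t)).symm
    _ ⊆ closure (convexHull ℝ (s ∩ t)) := closure_mono (convexHull_mono hext)

end ConvexHull

section JointSpectrum

/-- The bicommutant `s''` of `s`, as a subalgebra. It is commutative when `s` is, and inverting its
elements does not lead out of it. -/
def bicommutant {A : Type*} [Ring A] [Algebra ℂ A] (s : Set A) : Subalgebra ℂ A :=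
  Subalgebra.centralizer ℂ s.centralizer

theorem subset_bicommutant {A : Type*} [Ring A] [Algebra ℂ A] (s : Set A) :
    s ⊆ bicommutant s :=
  Set.subset_centralizer_centralizer

theorem spectrum_bicommutant_coe {A : Type*} [Ring A] [Algebra ℂ A] {s : Set A}
    (x : bicommutant s) : spectrum ℂ (x : A) = spectrum ℂ x := by
  have hunit (y : bicommutant s) : IsUnit (y : A) ↔ IsUnit y := by
    refine ⟨fun ⟨u, hu⟩ ↦ ?_, fun h ↦ h.map (bicommutant s).val⟩
    have hinv : (↑u⁻¹ : A) ∈ bicommutant s := (Subalgebra.mem_centralizer_iff ℂ).mpr fun g hg ↦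
      Commute.units_inv_right (hu ▸ (Subalgebra.mem_centralizer_iff ℂ).mp y.2 g hg)
    exact ⟨⟨y, ⟨_, hinv⟩, Subtype.ext (by simp [← hu]), Subtype.ext (by simp [← hu])⟩, rfl⟩
  ext z
  rw [spectrum.mem_iff, spectrum.mem_iff, ← hunit]
  rfl

theorem bicommutant_mul_comm {A : Type*} [Ring A] [Algebra ℂ A] {s : Set A}
    (hs : ∀ x ∈ s, ∀ y ∈ s, Commute x y) (x y : bicommutant s) : x * y = y * x :=
  Subtype.ext (Set.centralizer_centralizer_comm_of_comm hs x x.2 y y.2)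

/-- The joint spectrum of a family `x` in a complex algebra, relative to the bicommutant of its
range: the points `(χ (x i))ᵢ` for characters `χ` of this subalgebra. It is meant for commuting
families in Banach algebras. -/
def jointSpectrum {A ι : Type*} [Ring A] [Algebra ℂ A] (x : ι → A) : Set (ι → ℂ) :=
  Set.range fun (χ : bicommutant (Set.range x) →ₐ[ℂ] ℂ) i ↦
    χ ⟨x i, subset_bicommutant _ (Set.mem_range_self i)⟩

theorem jointSpectrum_apply_mul {A ι : Type*} [Ring A] [Algebra ℂ A] {x : ι → A} {z : ι → ℂ}
    (hz : z ∈ jointSpectrum x) {i j k : ι} (h : x i * x j = x k) : z i * z j = z k := by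
  obtain ⟨χ, rfl⟩ := hz
  exact (map_mul χ _ _).symm.trans (congrArg χ (Subtype.ext h))

theorem jointSpectrum_apply_mul_eq_one {A ι : Type*} [Ring A] [Algebra ℂ A] {x : ι → A}
    {z : ι → ℂ} (hz : z ∈ jointSpectrum x) {i j : ι} (h : x i * x j = 1) : z i * z j = 1 := by
  obtain ⟨χ, rfl⟩ := hz
  exact (map_mul χ _ _).symm.trans ((congrArg χ (Subtype.ext h)).trans (map_one χ))

variable {A : Type*} [NormedRing A] [NormedAlgebra ℂ A]

/-- The bicommutant of a commuting set is a commutative normed ring. -/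
abbrev bicommutantNormedCommRing {s : Set A} (hs : ∀ x ∈ s, ∀ y ∈ s, Commute x y) :
    NormedCommRing (bicommutant s) where
  __ := (inferInstance : NormedRing (bicommutant s))
  mul_comm := bicommutant_mul_comm hs

variable [CompleteSpace A] {ι : Type*} {x : ι → A}

theorem completeSpace_bicommutant (s : Set A) : CompleteSpace (bicommutant s) :=
  (Set.isClosed_centralizer (s.centralizer : Set A)).completeSpace_coe

theorem isCompact_jointSpectrum (hx : ∀ i j, Commute (x i) (x j)) :
    IsCompact (jointSpectrum x) := by
  let := bicommutantNormedCommRing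
    (Set.forall_mem_range.mpr fun i ↦ Set.forall_mem_range.mpr (hx i))
  have := completeSpace_bicommutant (Set.range x)
  rw [jointSpectrum, ← WeakDual.CharacterSpace.equivAlgHom.surjective.range_comp]
  refine isCompact_range (continuous_pi fun i ↦ ?_)
  exact (WeakDual.eval_continuous _).comp continuous_subtype_val

theorem spectrum_sum_smul_eq_image_jointSpectrum [Fintype ι] (hx : ∀ i j, Commute (x i) (x j))
    (c : ι → ℂ) : spectrum ℂ (∑ i, c i • x i) = (fun z ↦ ∑ i, c i * z i) '' jointSpectrum x := by
  let := bicommutantNormedCommRing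
    (Set.forall_mem_range.mpr fun i ↦ Set.forall_mem_range.mpr (hx i))
  have := completeSpace_bicommutant (Set.range x)
  let w : bicommutant (Set.range x) :=
    ∑ i, c i • ⟨x i, subset_bicommutant _ (Set.mem_range_self i)⟩
  have hw : (w : A) = ∑ i, c i • x i := by simp [w]
  rw [← hw, spectrum_bicommutant_coe, jointSpectrum, ← Set.range_comp,
    ← WeakDual.CharacterSpace.equivAlgHom.surjective.range_comp]
  ext z
  rw [WeakDual.CharacterSpace.mem_spectrum_iff_exists]
  simp only [Set.mem_range, Function.comp_apply, WeakDual.CharacterSpace.equivAlgHom_coe, w,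
    map_sum, map_smul, smul_eq_mul]

theorem spectrum_eq_image_jointSpectrum [Finite ι] (hx : ∀ i j, Commute (x i) (x j)) (i : ι) :
    spectrum ℂ (x i) = (fun z ↦ z i) '' jointSpectrum x := by
  classical
  have := Fintype.ofFinite ι
  simpa [Pi.single_apply, ite_smul] using
    spectrum_sum_smul_eq_image_jointSpectrum hx (Pi.single i 1)

theorem toReal_spectralRadius_add_le_of_commute {x y : A} (h : Commute x y) :
    ρ(x + y) ≤ ρ(x) + ρ(y) := by
  rcases subsingleton_or_nontrivial A with _ | _
  · simp [Subsingleton.elim _ (0 : A)]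
  have hcomm : ∀ i j, Commute (![x, y] i) (![x, y] j) := by
    simp [Fin.forall_fin_two, h, h.symm, Commute.refl]
  have hsum := spectrum_sum_smul_eq_image_jointSpectrum hcomm 1
  simp only [Fin.sum_univ_two, Pi.one_apply, one_smul, one_mul] at hsum
  obtain ⟨_, hz, hnorm⟩ := exists_mem_spectrum_norm_eq (x + y)
  obtain ⟨w, hw, rfl⟩ := hsum.subset hz
  have hmem (i : Fin 2) : w i ∈ spectrum ℂ (![x, y] i) :=
    spectrum_eq_image_jointSpectrum hcomm i ▸ Set.mem_image_of_mem _ hw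
  calc ρ(x + y) = ‖w 0 + w 1‖ := hnorm.symm
    _ ≤ ‖w 0‖ + ‖w 1‖ := norm_add_le _ _
    _ ≤ ρ(x) + ρ(y) :=
      add_le_add (norm_le_toReal_spectralRadius (hmem 0)) (norm_le_toReal_spectralRadius (hmem 1))

end JointSpectrum

section UnitPreservation

variable {A B : Type*} [NormedRing A] [NormedAlgebra ℂ A] [CompleteSpace A]
  [NormedRing B] [NormedAlgebra ℂ B] [CompleteSpace B]

theorem re_le_of_toReal_spectralRadius_algebraMap_add_le [Nontrivial A] {x : A} {y : B}
    (h : ∀ r : ℝ, ρ(algebraMap ℂ B r + y) ≤ ρ(algebraMap ℂ A r + x)) {c : ℝ}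
    (hc : ∀ z ∈ spectrum ℂ x, z.re ≤ c) {w : ℂ} (hw : w ∈ spectrum ℂ y) : w.re ≤ c := by
  have hle (r : ℝ) (hr : 0 ≤ r) : 2 * r * (w.re - c) ≤ ρ(x) ^ 2 := by
    obtain ⟨_, hz, hnorm⟩ := exists_mem_spectrum_norm_eq (algebraMap ℂ A r + x)
    rw [← spectrum.singleton_add_eq, Set.singleton_add] at hz
    obtain ⟨z, hz, rfl⟩ := hz
    have hrw : (r : ℂ) + w ∈ spectrum ℂ (algebraMap ℂ B r + y) := by
      simpa [← spectrum.singleton_add_eq] using hw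
    have hrwz : ‖(r : ℂ) + w‖ ≤ ‖(r : ℂ) + z‖ :=
      (norm_le_toReal_spectralRadius hrw).trans ((h r).trans hnorm.ge)
    have hzx : ‖z‖ ^ 2 ≤ ρ(x) ^ 2 := by gcongr; exact norm_le_toReal_spectralRadius hz
    have hsq := pow_le_pow_left₀ (norm_nonneg _) hrwz 2
    simp only [Complex.sq_norm, Complex.normSq_apply, Complex.add_re, Complex.add_im,
      Complex.ofReal_re, Complex.ofReal_im, zero_add] at hsq hzx
    nlinarith [mul_le_mul_of_nonneg_left (hc z hz) hr, sq_nonneg w.re, sq_nonneg w.im]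
  by_contra! hwc
  have : 0 < w.re - c := sub_pos.mpr hwc
  have hquot := hle ((ρ(x) ^ 2 + 1) / (2 * (w.re - c))) (by positivity)
  have heq : 2 * ((ρ(x) ^ 2 + 1) / (2 * (w.re - c))) * (w.re - c) = ρ(x) ^ 2 + 1 := by field_simp
  linarith

theorem jointSpectrum_subset_convexHull [Nontrivial A] {ι : Type*} [Fintype ι] {x : ι → A}
    {y : ι → B} (hx : ∀ i j, Commute (x i) (x j)) (hy : ∀ i j, Commute (y i) (y j))
    (h : ∀ (r : ℝ) (c : ι → ℂ),
      ρ(algebraMap ℂ B r + ∑ i, c i • y i) ≤ ρ(algebraMap ℂ A r + ∑ i, c i • x i)) :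
    jointSpectrum y ⊆ convexHull ℝ (jointSpectrum x) := by
  classical
  intro w hw
  by_contra hwx
  obtain ⟨f, u, hfu, hfw⟩ := RCLike.geometric_hahn_banach_closed_point (𝕜 := ℂ)
    (convex_convexHull ℝ _)
    (isCompact_convexHull_of_finiteDimensional (isCompact_jointSpectrum hx)).isClosed hwx
  obtain ⟨c, hf⟩ : ∃ c : ι → ℂ, ∀ z, f z = ∑ i, c i * z i :=
    ⟨fun i ↦ f fun j ↦ if i = j then 1 else 0, fun z ↦ by
      simpa [mul_comm] using f.toLinearMap.pi_apply_eq_sum_univ z⟩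
  refine hfw.not_ge (re_le_of_toReal_spectralRadius_algebraMap_add_le (h · c) ?_ ?_)
  · rw [spectrum_sum_smul_eq_image_jointSpectrum hx]
    rintro _ ⟨z, hz, rfl⟩
    exact (congrArg Complex.re (hf z)).ge.trans (hfu z (subset_convexHull ℝ _ hz)).le
  · rw [spectrum_sum_smul_eq_image_jointSpectrum hy]
    exact ⟨w, hw, (hf w).symm⟩

theorem IsSpectralIsometry.jointSpectrum_map_subset_closure_convexHull_inter
    [Nontrivial A] [Nontrivial B] {T : A →ₗ[ℂ] B} (hρ : IsSpectralIsometry T) (hT1 : T 1 = 1)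
    {ι : Type*} [Finite ι] {x : ι → A} (hx : ∀ i j, Commute (x i) (x j))
    (hTx : ∀ i j, Commute (T (x i)) (T (x j))) :
    jointSpectrum (T ∘ x) ⊆ closure (convexHull ℝ (jointSpectrum x ∩ jointSpectrum (T ∘ x))) := by
  have := Fintype.ofFinite ι
  have h (r : ℝ) (c : ι → ℂ) :
      ρ(algebraMap ℂ B r + ∑ i, c i • (T ∘ x) i) = ρ(algebraMap ℂ A r + ∑ i, c i • x i) := by
    rw [← hρ]
    simp [Algebra.algebraMap_eq_smul_one, hT1]
  exact subset_closure_convexHull_inter (isCompact_jointSpectrum hTx)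
    (jointSpectrum_subset_convexHull hTx hx fun r c ↦ (h r c).ge)
    (jointSpectrum_subset_convexHull hx hTx fun r c ↦ (h r c).le)

theorem IsSpectralIsometry.isUnit_map_of_commute {T : A →ₗ[ℂ] B} (hρ : IsSpectralIsometry T)
    (hT1 : T 1 = 1) {a b c : A} (hab : a * b = 1)
    (hcomm : Commute a b) (hac : Commute a c) (hbc : Commute b c)
    (hTcomm : Commute (T a) (T b)) (hc : T c = T a * T b) : IsUnit (T a) := by
  nontriviality B
  have : Nontrivial A := ⟨1, 0, ne_of_apply_ne T (by simp [hT1])⟩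
  have hx : ∀ i j, Commute (![a, b, c] i) (![a, b, c] j) := by
    simp [Fin.forall_fin_succ, hcomm, hcomm.symm, hac, hac.symm, hbc, hbc.symm]
  have hTx : ∀ i j, Commute (T (![a, b, c] i)) (T (![a, b, c] j)) := by
    simp [Fin.forall_fin_succ, hTcomm, hTcomm.symm, hc, Commute.mul_left, Commute.mul_right]
  have hone : jointSpectrum (T ∘ ![a, b, c]) ⊆ {z | z 2 = 1} := by
    refine (hρ.jointSpectrum_map_subset_closure_convexHull_inter hT1 hx hTx).trans
      (closure_minimal (convexHull_min ?_ ?_) (isClosed_eq (by fun_prop) (by fun_prop)))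
    · rintro z ⟨hz, hTz⟩
      exact (jointSpectrum_apply_mul hTz (i := 0) (j := 1) (k := 2) hc.symm).symm.trans
        (jointSpectrum_apply_mul_eq_one hz (i := 0) (j := 1) hab)
    · exact (convex_singleton (1 : ℂ)).linear_preimage
        (LinearMap.proj (R := ℝ) (φ := fun _ : Fin 3 ↦ ℂ) 2)
  rw [← spectrum.zero_notMem_iff ℂ]
  intro hzero
  obtain ⟨z, hz, hz0⟩ := (spectrum_eq_image_jointSpectrum hTx 0).subset hzero
  have hz2 : z 0 * z 1 = z 2 := jointSpectrum_apply_mul hz (i := 0) (j := 1) (k := 2) hc.symm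
  simp [show z 0 = 0 from hz0, show z 2 = 1 from hone hz] at hz2

end UnitPreservation

section SpectralIsometry

variable {A B : Type*} [NormedRing A] [NormedAlgebra ℂ A]
  [NormedRing B] [NormedAlgebra ℂ B] {ι : Type*} {m : ι → Type*}
  [∀ i, Fintype (m i)] [∀ i, DecidableEq (m i)] {π : ∀ i, B →ₐ[ℂ] Matrix (m i) (m i) ℂ}
  {T : A →ₗ[ℂ] B}

/-- The intersection of the kernels of those representations `π i` for which `π i ∘ T` does not
annihilate all commutators. Commutativity of `x` and `y` only yields `⁅T x, T y⁆ = 0` modulo this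
ideal. -/
def lieKernel (π : ∀ i, B →ₐ[ℂ] Matrix (m i) (m i) ℂ) (T : A →ₗ[ℂ] B) : TwoSidedIdeal B :=
  ⨅ i : {i // ∃ u v, π i (T ⁅(u : A), v⁆) ≠ 0}, TwoSidedIdeal.ker (π i)

theorem mem_lieKernel {k : B} :
    k ∈ lieKernel π T ↔ ∀ i, (∃ u v, π i (T ⁅(u : A), v⁆) ≠ 0) → π i k = 0 := by
  simp only [lieKernel, TwoSidedIdeal.mem_iInf, TwoSidedIdeal.mem_ker, Subtype.forall]

variable [CompleteSpace A]

theorem IsSpectralContraction.lie_map_mem_lieKernel (hT : IsSpectralContraction T)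
    (hsurj : Function.Surjective T) (hπ : ∀ i, Function.Surjective (π i)) {x y : A}
    (h : Commute x y) : ⁅T x, T y⁆ ∈ lieKernel π T := by
  refine mem_lieKernel.mpr fun i ⟨u, v, huv⟩ ↦ ?_
  have hcomm : Commute (π i (T x)) (π i (T y)) :=
    (hT.algHom_comp (π i)).commute_of_map_lie_eq_zero ((hπ i).comp hsurj) huv
      (by simp [commute_iff_lie_eq.mp h])
  simpa [Ring.lie_def, sub_eq_zero] using hcomm.eq

theorem IsSpectralContraction.map_lie_eq_zero_of_map_mem_lieKernel
    (hT : IsSpectralContraction T) (hsurj : Function.Surjective T)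
    (hπ : ∀ i, Function.Surjective (π i)) (hsep : ∀ b, (∀ i, π i b = 0) → b = 0) {l : A}
    (hl : T l ∈ lieKernel π T) (a : A) : T ⁅a, l⁆ = 0 := by
  refine hsep _ fun i ↦ ?_
  by_cases hi : ∃ u v, π i (T ⁅(u : A), v⁆) ≠ 0
  · exact (hT.algHom_comp (π i)).map_lie_eq_zero_of_map_right_eq_zero ((hπ i).comp hsurj) a
      (mem_lieKernel.mp hl i hi)
  · push Not at hi
    exact hi a l

namespace IsSpectralIsometry

variable (hT : IsSpectralIsometry T) (hsurj : Function.Surjective T)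
  (hA : (⊥ : Ideal A).jacobson = ⊥) (hπ : ∀ i, Function.Surjective (π i))
  (hsep : ∀ b, (∀ i, π i b = 0) → b = 0)

include hT hsurj hA hπ hsep

theorem eq_zero_of_map_eq_zero {x : A} (hx : T x = 0) : x = 0 := by
  have hmem : T x ∈ lieKernel π T := hx ▸ zero_mem _
  have hlie (a : A) : T ⁅x, a⁆ = 0 := by
    rw [← lie_skew, map_neg, neg_eq_zero]
    exact hT.isSpectralContraction.map_lie_eq_zero_of_map_mem_lieKernel hsurj hπ hsep hmem a
  have hjac : x ∈ (⊥ : Ideal A).jacobson := by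
    refine mem_jacobson_of_spectralRadius_lie_eq_zero ?_ fun a ↦ ?_
    · rw [← hT, hx, spectrum.spectralRadius_zero]
    · rw [← hT, hlie, spectrum.spectralRadius_zero]
  rwa [hA] at hjac

theorem commute_of_commute_map {x y : A} (h : Commute (T x) (T y)) : Commute x y := by
  refine commute_iff_lie_eq.mpr (hT.eq_zero_of_map_eq_zero hsurj hA hπ hsep (hsep _ fun i ↦ ?_))
  exact (hT.isSpectralContraction.algHom_comp (π i)).map_lie_eq_zero_of_commute
    ((hπ i).comp hsurj) (h.map (π i))

theorem commute_of_map_mem_lieKernel {l : A} (hl : T l ∈ lieKernel π T) (a : A) : Commute a l :=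
  commute_iff_lie_eq.mpr <| hT.eq_zero_of_map_eq_zero hsurj hA hπ hsep <|
    hT.isSpectralContraction.map_lie_eq_zero_of_map_mem_lieKernel hsurj hπ hsep hl a

variable [CompleteSpace B]

theorem commute_map_of_commute {x y : A} (h : Commute x y) : Commute (T x) (T y) := by
  have hsubadd : ∀ k ∈ lieKernel π T, ∀ l ∈ lieKernel π T, ρ(k + l) ≤ ρ(k) + ρ(l) := by
    refine hsurj.forall.mpr fun a _ ↦ hsurj.forall.mpr fun b hb ↦ ?_
    rw [← map_add, hT, hT, hT]
    exact toReal_spectralRadius_add_le_of_commute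
      (hT.commute_of_map_mem_lieKernel hsurj hA hπ hsep hb a)
  have hmem := hT.isSpectralContraction.lie_map_mem_lieKernel hsurj hπ h
  refine commute_iff_lie_eq.mpr (hsep _ fun i ↦ ?_)
  refine eq_zero_of_forall_commute_of_trace_eq_zero
    (commute_map_of_spectralRadius_add_le (π i) (hπ i) hsubadd hmem) ?_
  simp [Ring.lie_def, Matrix.trace_sub, Matrix.trace_mul_comm (π i (T x))]

theorem isUnit_map_of_isUnit (hT1 : T 1 = 1) {a : A} (ha : IsUnit a) : IsUnit (T a) := by
  obtain ⟨u, rfl⟩ := ha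
  obtain ⟨c, hc⟩ := hsurj (T u * T ↑u⁻¹)
  have huv : Commute (u : A) ↑u⁻¹ := (Commute.refl _).units_inv_right
  have hTuv : Commute (T u) (T ↑u⁻¹) := hT.commute_map_of_commute hsurj hA hπ hsep huv
  have hback {x : A} (h : Commute (T x) (T c)) : Commute x c :=
    hT.commute_of_commute_map hsurj hA hπ hsep h
  refine hT.isUnit_map_of_commute hT1 u.mul_inv huv (hback ?_) (hback ?_) hTuv hc
  · exact hc ▸ (Commute.refl _).mul_right hTuv
  · exact hc ▸ hTuv.symm.mul_right (Commute.refl _)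

end IsSpectralIsometry

end SpectralIsometry

/-- Under the hypotheses of the main theorem, the spectral isometry `T`
satisfies `σ(T a) ⊆ σ(a)` for every `a ∈ A`; in particular `T` preserves invertibility. -/
theorem spectral_isometry_spectrum_shrinks
    {A B : Type*} [NormedRing A] [NormedAlgebra ℂ A] [CompleteSpace A]
    [NormedRing B] [NormedAlgebra ℂ B] [CompleteSpace B]
    (hA : (⊥ : Ideal A).jacobson = ⊥)
    {ι : Type*} (n : ι → ℕ) (hn : ∀ i, 0 < n i)
    (π : ∀ i, B →ₐ[ℂ] Matrix (Fin (n i)) (Fin (n i)) ℂ)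
    (hπcont : ∀ i, Continuous (π i))
    (hπsurj : ∀ i, Function.Surjective (π i))
    (hsep : ∀ b : B, (∀ i, π i b = 0) → b = 0)
    (T : A →ₗ[ℂ] B) (hTsurj : Function.Surjective T) (hT1 : T 1 = 1)
    (hρ : ∀ a : A, spectralRadius ℂ (T a) = spectralRadius ℂ a) :
    ∀ a : A, spectrum ℂ (T a) ⊆ spectrum ℂ a ∧ (IsUnit a → IsUnit (T a)) := by
  have hT : IsSpectralIsometry T := hρ
  have hunit {a : A} : IsUnit a → IsUnit (T a) :=
    hT.isUnit_map_of_isUnit hTsurj hA hπsurj hsep hT1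
  refine fun a ↦ ⟨fun z hz ha ↦ hz ?_, hunit⟩
  have h : algebraMap ℂ B z - T a = T (algebraMap ℂ A z - a) := by
    simp [Algebra.algebraMap_eq_smul_one, hT1]
  exact spectrum.mem_resolventSet_iff.mpr (h ▸ hunit ha)
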